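/- Suppose (A,C) is observable and the neighbor sequence satisfies conditions (C1)–(C3). Then there exist observer gains L_1,…,L_N such that, for every run of Algorithm 1 with these gains (i.e., for every choice of the minimizing neighbors u in the update rules) and every initialization of the estimates, there is a finite time K ∈ ℕ with x̂_i[k] = x[k] for all nodes i ∈ {1,…,N} and all k ≥ K. -/

import Mathlib

/-!
The argument has two independent ingredients.

*Deadbeat gains.* For an observable pair `(A, C)` put `V 0 = ⊤` and `V (k+1) = A (V k ∩ ker C)`.
This is a decreasing chain with `V n = 0` by observability, and there is a linear map `σ` which is
a section of `C` over every `C (V k)` and sends `C (V k)` into `V k`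
(`exists_filtered_section`). With `L = A σ` one has `(A - L C) v = A (v - σ C v) ∈ V (k+1)` for
`v ∈ V k`, so `(A - L C) ^ n = 0` (`exists_deadbeat_gain`).

*Propagation of exact estimates.* Fix a block `j` and suppose all earlier blocks are exact at every
node from time `K₀` on. The source error then evolves by the nilpotent matrix, so it vanishes from
`K₁ = K₀ + d j` on. Call node `i` informed at time `k` if `τ i j k + K₁ ≤ k`, i.e. if its estimate
was generated by the source at time `K₁` or later. An informed estimate is exact, being an exact
source estimate propagated by the exact dynamics. Being informed persists in time and passes to
out-neighbours, so the set of nodes that ever become informed is closed under the edges of every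
sufficiently late window; strong connectivity of that window shows it is everything
(`eventually_all_informed`). A strong induction on `j` concludes.
-/

open Finset

/-- A pair `(A, C)` is *observable* if the stacked observability matrix
`[C; CA; …; CA^{n−1}]` has rank `n`. -/
def Observable {n : ℕ} {R : Type*} [Fintype R]
    (A : Matrix (Fin n) (Fin n) ℝ) (C : Matrix R (Fin n) ℝ) : Prop :=
  Matrix.rank (Matrix.of fun (p : Fin n × R) (col : Fin n) => (C * A ^ (p.1 : ℕ)) p.2 col) = n

/-- The Euclidean norm of a vector in `ℝ^m`. -/
noncomputable def eNorm {m : ℕ} (v : Fin m → ℝ) : ℝ := Real.sqrt (∑ p, v p ^ 2)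

/-- The index of the largest element `t q` of the sequence `𝕀` with `t q ≤ k`. -/
def lastIdx (t : ℕ → ℕ) (k : ℕ) : ℕ := Nat.findGreatest (fun q => t q ≤ k) k

/-- The function `g(k) = f(m(k)) = t_{q+1} − t_q` where `t_q = m(k)` is the largest element
of `𝕀` not exceeding `k`. -/
def gfun (t : ℕ → ℕ) (k : ℕ) : ℕ := t (lastIdx t k + 1) - t (lastIdx t k)

/-! ### Deadbeat gains -/

section Deadbeat

variable {K E W : Type*} [Field K] [AddCommGroup E] [Module K E] [AddCommGroup W] [Module K W]

/-- Over a single subspace `V`, a linear map has a linear section on the image of `V` with values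
in `V`. -/
lemma exists_section_on (C : E →ₗ[K] W) (V : Submodule K E) :
    ∃ σ : W →ₗ[K] E, ∀ w ∈ V.map C, σ w ∈ V ∧ C (σ w) = w := by
  obtain ⟨s, hs⟩ := (C.submoduleMap V).exists_rightInverse_of_surjective
    (LinearMap.range_eq_top.2 (C.submoduleMap_surjective V))
  obtain ⟨σ, hσ⟩ := LinearMap.exists_extend (V.subtype ∘ₗ s)
  refine ⟨σ, fun w hw => ?_⟩
  have h1 : σ w = (s ⟨w, hw⟩ : E) := LinearMap.congr_fun hσ ⟨w, hw⟩
  have h2 : C (s ⟨w, hw⟩ : E) = w :=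
    congrArg Subtype.val (LinearMap.congr_fun hs ⟨w, hw⟩)
  rw [h1]
  exact ⟨(s ⟨w, hw⟩).2, h2⟩

/-- A section of `C` compatible with a whole decreasing filtration that reaches zero. It is built
from the small end: the section for the shifted filtration is used on `C (V 1)`, and a section
for `V 0` on a complement. -/
lemma exists_filtered_section (C : E →ₗ[K] W) (m : ℕ) (V : ℕ → Submodule K E)
    (hV : Antitone V) (hm : V m = ⊥) :
    ∃ σ : W →ₗ[K] E, ∀ k, ∀ w ∈ (V k).map C, σ w ∈ V k ∧ C (σ w) = w := by
  induction m generalizing V with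
  | zero =>
    refine ⟨0, fun k w hw => ?_⟩
    have hk : V k = ⊥ := le_bot_iff.1 (hm ▸ hV (Nat.zero_le k))
    rw [hk, Submodule.map_bot, Submodule.mem_bot] at hw
    simp [hw]
  | succ m ih =>
    obtain ⟨σ, hσ⟩ := ih (fun k => V (k + 1)) (fun a b h => hV (by omega)) hm
    obtain ⟨ρ, hρ⟩ := exists_section_on C (V 0)
    -- `p` is a projection of `W` onto `C (V 1)`.
    obtain ⟨p, hp⟩ := LinearMap.exists_extend (LinearMap.id : (V 1).map C →ₗ[K] (V 1).map C)
    have hp' : ∀ w (hw : w ∈ (V 1).map C), (p w : W) = w := fun w hw =>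
      congrArg Subtype.val (LinearMap.congr_fun hp ⟨w, hw⟩)
    have h10 : V 1 ≤ V 0 := hV (Nat.zero_le 1)
    refine ⟨σ ∘ₗ Submodule.subtype _ ∘ₗ p
      + ρ ∘ₗ (LinearMap.id - Submodule.subtype _ ∘ₗ p), fun k w hw => ?_⟩
    have hval : (σ ∘ₗ Submodule.subtype _ ∘ₗ p
      + ρ ∘ₗ (LinearMap.id - Submodule.subtype _ ∘ₗ p) : W →ₗ[K] E) w = σ (p w) + ρ (w - p w) := rfl
    rw [hval]
    cases k with
    | zero =>
      obtain ⟨h1, h2⟩ := hσ 0 _ (p w).2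
      obtain ⟨h3, h4⟩ := hρ (w - p w) (sub_mem hw (Submodule.map_mono h10 (p w).2))
      refine ⟨add_mem (h10 h1) h3, ?_⟩
      rw [map_add, h2, h4]
      abel
    | succ k =>
      rw [hp' w (Submodule.map_mono (hV (by omega)) hw), sub_self, map_zero, add_zero]
      exact hσ k w hw

/-- The decreasing chain `⊤`, `A (ker C)`, `A (A (ker C) ∩ ker C)`, …; its `k`-th term consists of
the states `A ^ k u` reachable from some `u` with zero output at times `0, …, k - 1`. -/
def silentImage (A : E →ₗ[K] E) (C : E →ₗ[K] W) : ℕ → Submodule K E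
  | 0 => ⊤
  | k + 1 => (silentImage A C k ⊓ LinearMap.ker C).map A

lemma silentImage_antitone (A : E →ₗ[K] E) (C : E →ₗ[K] W) : Antitone (silentImage A C) := by
  refine antitone_nat_of_succ_le fun k => ?_
  induction k with
  | zero => exact le_top
  | succ k ih => exact Submodule.map_mono (inf_le_inf_right _ ih)

lemma exists_of_mem_silentImage (A : E →ₗ[K] E) (C : E →ₗ[K] W) (k : ℕ) (v : E)
    (hv : v ∈ silentImage A C k) : ∃ u, (∀ i < k, C ((A ^ i) u) = 0) ∧ v = (A ^ k) u := by
  induction k generalizing v with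
  | zero => exact ⟨v, by simp, by simp⟩
  | succ k ih =>
    obtain ⟨v', ⟨h1, h2⟩, rfl⟩ := hv
    obtain ⟨u, hu, rfl⟩ := ih v' h1
    refine ⟨u, fun i hi => ?_, by rw [pow_succ', Module.End.mul_apply]⟩
    rcases Nat.lt_succ_iff_lt_or_eq.1 hi with h | rfl
    · exact hu i h
    · exact h2

lemma exists_deadbeat_linear (A : E →ₗ[K] E) (C : E →ₗ[K] W) (m : ℕ)
    (hobs : ∀ u, (∀ i < m, C ((A ^ i) u) = 0) → u = 0) :
    ∃ L : W →ₗ[K] E, (A - L ∘ₗ C) ^ m = 0 := by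
  have hbot : silentImage A C m = ⊥ := by
    refine (Submodule.eq_bot_iff _).2 fun v hv => ?_
    obtain ⟨u, hu, rfl⟩ := exists_of_mem_silentImage A C m v hv
    rw [hobs u hu, map_zero]
  obtain ⟨σ, hσ⟩ := exists_filtered_section C m _ (silentImage_antitone A C) hbot
  refine ⟨A ∘ₗ σ, ?_⟩
  have hstep : ∀ k v, ((A - (A ∘ₗ σ) ∘ₗ C) ^ k) v ∈ silentImage A C k := by
    intro k v
    induction k with
    | zero => exact Submodule.mem_top
    | succ k ih =>
      rw [pow_succ', Module.End.mul_apply]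
      set y := ((A - (A ∘ₗ σ) ∘ₗ C) ^ k) v
      obtain ⟨h1, h2⟩ := hσ k (C y) (Submodule.mem_map_of_mem ih)
      refine ⟨y - σ (C y), ⟨sub_mem ih h1, ?_⟩, by simp⟩
      simp [h2]
  ext v
  simpa [hbot] using hstep m v

end Deadbeat

lemma Observable.eq_zero {n : ℕ} {R : Type*} [Fintype R]
    {A : Matrix (Fin n) (Fin n) ℝ} {C : Matrix R (Fin n) ℝ} (h : Observable A C)
    (u : Fin n → ℝ) (hu : ∀ i < n, C.mulVec ((A ^ i).mulVec u) = 0) : u = 0 := by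
  set O := Matrix.of fun (p : Fin n × R) (col : Fin n) => (C * A ^ (p.1 : ℕ)) p.2 col with hO
  have hr : Module.finrank ℝ (LinearMap.range O.mulVecLin) = n := h
  have hrn := LinearMap.finrank_range_add_finrank_ker O.mulVecLin
  rw [hr, Module.finrank_fin_fun] at hrn
  have hker : LinearMap.ker O.mulVecLin = ⊥ := Submodule.finrank_eq_zero.1 (by omega)
  refine (LinearMap.ker_eq_bot'.1 hker) u ?_
  ext p
  have := congrFun (hu p.1 p.1.2) p.2
  rw [Matrix.mulVec_mulVec] at this
  exact this

/-- Deadbeat observer design: for an observable pair some gain makes the error matrix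
nilpotent. -/
lemma exists_deadbeat_gain {n r : ℕ} (A : Matrix (Fin n) (Fin n) ℝ)
    (C : Matrix (Fin r) (Fin n) ℝ) (h : Observable A C) :
    ∃ L : Matrix (Fin n) (Fin r) ℝ, (A - L * C) ^ n = 0 := by
  obtain ⟨L, hL⟩ := exists_deadbeat_linear (Matrix.toLin' A) (Matrix.toLin' C) n (by
    intro u hu
    refine h.eq_zero u fun i hi => ?_
    have := hu i hi
    rwa [← Matrix.toLin'_pow, Matrix.toLin'_apply, Matrix.toLin'_apply] at this)
  refine ⟨LinearMap.toMatrix' L, Matrix.toLin'.injective ?_⟩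
  rw [Matrix.toLin'_pow, map_sub, Matrix.toLin'_mul, Matrix.toLin'_toMatrix', hL, map_zero]

/-! ### Spread of fresh estimates -/

/-- If being informed persists at each node, passes along every active edge and starts at some
node, then union connectivity of every window makes all nodes informed eventually. -/
lemma eventually_all_informed {N : ℕ} (Nbrs : Fin N → ℕ → Set (Fin N)) (t : ℕ → ℕ)
    (htmono : StrictMono t)
    (hconn : ∀ q, ∀ a b : Fin N,
      Relation.ReflTransGen
        (fun l i => ∃ τ, t q ≤ τ ∧ τ < t (q + 1) ∧ l ∈ Nbrs i τ) a b)
    (I : Fin N → ℕ → Prop) (hpersist : ∀ i k, I i k → I i (k + 1))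
    (hspread : ∀ i l k, l ∈ Nbrs i k → I l k → I i (k + 1))
    (j : Fin N) (k₀ : ℕ) (hj : I j k₀) : ∃ K, ∀ i k, K ≤ k → I i k := by
  have hmono : ∀ i k k', k ≤ k' → I i k → I i k' := by
    intro i k k' hk h
    induction hk with
    | refl => exact h
    | step _ ih => exact hpersist _ _ ih
  -- From time `K` on, every node that is ever informed is informed.
  have hK : ∃ K, ∀ i, (∃ k, I i k) → I i K := by
    classical
    choose f hf using fun i : {i // ∃ k, I i k} => i.2
    refine ⟨Finset.univ.sup f, fun i hi => ?_⟩
    exact hmono i _ _ (Finset.le_sup (Finset.mem_univ (⟨i, hi⟩ : {i // ∃ k, I i k}))) (hf ⟨i, hi⟩)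
  obtain ⟨K, hK⟩ := hK
  refine ⟨K, fun i k hk => hmono i K k hk (hK i ?_)⟩
  induction hconn K j i with
  | refl => exact ⟨k₀, hj⟩
  | tail _ hedge ih =>
    obtain ⟨s, hs, -, hmem⟩ := hedge
    exact ⟨s + 1, hspread _ _ s hmem (hmono _ K s (htmono.le_apply.trans hs) (hK _ ih))⟩

/-! ### Block dynamics -/

/-- A matrix-vector product in block coordinates for a block row vanishing beyond position `j`. -/
lemma mulVec_block_lower {n N m : ℕ} {d : Fin N → ℕ} (e : (Σ j : Fin N, Fin (d j)) ≃ Fin n)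
    (M : Matrix (Fin m) (Fin n) ℝ) (B : ∀ q : Fin N, Matrix (Fin m) (Fin (d q)) ℝ)
    (hB : ∀ q a b, B q a b = M a (e ⟨q, b⟩)) (j : Fin N) (hlow : ∀ q, j < q → B q = 0)
    (v : Fin n → ℝ) :
    M.mulVec v = (B j).mulVec (fun b => v (e ⟨j, b⟩))
      + ∑ q ∈ Finset.univ.filter (fun q => q < j), (B q).mulVec (fun b => v (e ⟨q, b⟩)) := by
  have hfull : M.mulVec v = ∑ q, (B q).mulVec (fun b => v (e ⟨q, b⟩)) := by
    ext a
    simp only [Matrix.mulVec, dotProduct, Finset.sum_apply, hB]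
    rw [← e.sum_comp, Fintype.sum_sigma]
  have hfilter : ∑ q, (B q).mulVec (fun b => v (e ⟨q, b⟩))
      = ∑ q ∈ insert j (Finset.univ.filter (fun q => q < j)),
          (B q).mulVec (fun b => v (e ⟨q, b⟩)) := by
    symm
    refine Finset.sum_subset (Finset.subset_univ _) fun q _ hq => ?_
    have : j < q := by
      simp only [Finset.mem_insert, Finset.mem_filter, Finset.mem_univ, true_and, not_or,
        not_lt] at hq
      exact lt_of_le_of_ne hq.2 (Ne.symm hq.1)
    rw [hlow q this, Matrix.zero_mulVec]
  rw [hfull, hfilter, Finset.sum_insert (by simp)]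

/-- **Proposition 1 (finite-time convergence)**: under joint observability and the
communication conditions (C1)–(C3), the observer gains can be chosen so that every run of
Algorithm 1 recovers the state exactly in finite time. -/
theorem algorithm1_finite_time_convergence
    -- system and measurements
    {n N : ℕ} (hN : 0 < N)
    (A : Matrix (Fin n) (Fin n) ℝ)
    (r : Fin N → ℕ) (C : ∀ i : Fin N, Matrix (Fin (r i)) (Fin n) ℝ)
    (x : ℕ → (Fin n → ℝ)) (hx : ∀ k, x (k + 1) = A.mulVec (x k))
    (hobs : Observable A
      (Matrix.of fun (p : Σ i : Fin N, Fin (r i)) (col : Fin n) => C p.1 p.2 col))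
    -- communication graph sequence: `Nbrs i k` is the in-neighbor set of node `i` at time `k`
    (Nbrs : Fin N → ℕ → Set (Fin N)) (hNbrs : ∀ i k, i ∉ Nbrs i k)
    -- the sequence 𝕀 = {t 0 = 0 < t 1 < t 2 < …}
    (t : ℕ → ℕ) (ht0 : t 0 = 0) (htmono : StrictMono t)
    -- (C1): f(t_q) := t_{q+1} − t_q is nondecreasing in q
    (hC1 : ∀ q, t (q + 1) - t q ≤ t (q + 2) - t (q + 1))
    -- (C2): limsup_{k→∞} 2(N−1)g(k)/k = δ < 1
    (hC2 : ∃ δ : ℝ, δ < 1 ∧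
      Filter.limsup (fun k : ℕ => (2 * (N - 1 : ℝ) * (gfun t k : ℝ)) / (k : ℝ))
        Filter.atTop = δ)
    -- (C3): the union graph over each interval [t_q, t_{q+1}) is strongly connected
    (hC3 : ∀ q, ∀ a b : Fin N,
      Relation.ReflTransGen
        (fun l i => ∃ τ, t q ≤ τ ∧ τ < t (q + 1) ∧ l ∈ Nbrs i τ) a b)
    -- the multi-sensor observability decomposition: an invertible `T`,
    -- block sizes `d j` with index identification `e`
    (T : Matrix (Fin n) (Fin n) ℝ) (hT : IsUnit T.det)
    (d : Fin N → ℕ) (e : (Σ j : Fin N, Fin (d j)) ≃ Fin n)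
    -- block entries of `Ā = T⁻¹AT` and `C̄_j = C_j T`
    (Ablk : ∀ j q : Fin N, Matrix (Fin (d j)) (Fin (d q)) ℝ)
    (Cblk : ∀ j q : Fin N, Matrix (Fin (r j)) (Fin (d q)) ℝ)
    (hAblk : ∀ (j q : Fin N) (a : Fin (d j)) (b : Fin (d q)),
      Ablk j q a b = (T⁻¹ * A * T) (e ⟨j, a⟩) (e ⟨q, b⟩))
    (hCblk : ∀ (j q : Fin N) (row : Fin (r j)) (b : Fin (d q)),
      Cblk j q row b = (C j * T) row (e ⟨q, b⟩))
    -- `Ā` is block lower triangular and `C̄_j = [C_{j1} … C_{jj} 0 … 0]`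
    (hAlow : ∀ j q : Fin N, j < q → Ablk j q = 0)
    (hClow : ∀ j q : Fin N, j < q → Cblk j q = 0)
    -- each diagonal pair is observable
    (hblkobs : ∀ j : Fin N, Observable (Ablk j j) (Cblk j j)) :
    -- conclusion: there exist gains L such that every run of Algorithm 1
    -- converges in finite time
    ∃ L : ∀ j : Fin N, Matrix (Fin (d j)) (Fin (r j)) ℝ,
      ∀ (τ : Fin N → Fin N → ℕ → ℕ∞)
        (zhat : ∀ (_ : Fin N) (j : Fin N), ℕ → (Fin (d j) → ℝ)),
        -- source node: zero freshness-index and Luenberger-type update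
        (∀ j : Fin N, ∀ k, τ j j k = 0) →
        (∀ j : Fin N, ∀ k, zhat j j (k + 1) =
          (Ablk j j - L j * Cblk j j).mulVec (zhat j j k)
          + ∑ q ∈ Finset.univ.filter (fun q => q < j),
              (Ablk j q - L j * Cblk j q).mulVec (zhat j q k)
          + (L j).mulVec ((C j).mulVec (x k))) →
        -- non-source nodes: initialization and freshness-index based updates
        (∀ i j : Fin N, i ≠ j → τ i j 0 = ⊤) →
        (∀ i j : Fin N, i ≠ j → ∀ k,
          (sInf ((fun l => τ l j k) '' Nbrs i k) < τ i j k →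
            ∃ u ∈ Nbrs i k,
              τ u j k = sInf ((fun l => τ l j k) '' Nbrs i k) ∧
              τ i j (k + 1) = τ u j k + 1 ∧
              zhat i j (k + 1) = (Ablk j j).mulVec (zhat u j k)
                + ∑ q ∈ Finset.univ.filter (fun q => q < j),
                    (Ablk j q).mulVec (zhat i q k)) ∧
          (¬ sInf ((fun l => τ l j k) '' Nbrs i k) < τ i j k →
            τ i j (k + 1) = τ i j k + 1 ∧
            zhat i j (k + 1) = (Ablk j j).mulVec (zhat i j k)
              + ∑ q ∈ Finset.univ.filter (fun q => q < j),
                  (Ablk j q).mulVec (zhat i q k))) →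
        -- conclusion: with x̂_i[k] = T ẑ_i[k], the estimate equals the state from
        -- some finite time K onwards
        ∃ K : ℕ, ∀ (i : Fin N) (k : ℕ), K ≤ k →
          (T.mulVec (fun p' => zhat i (e.symm p').1 k (e.symm p').2)) = x k := by
  choose L hL using fun j => exists_deadbeat_gain (Ablk j j) (Cblk j j) (hblkobs j)
  refine ⟨L, fun τ zhat hτs hzs hτ0 hupd => ?_⟩
  -- `z j k` is block `j` of the transformed state `T⁻¹ x[k]`.
  set z : ∀ j : Fin N, ℕ → (Fin (d j) → ℝ) :=
    fun j k b => (T⁻¹.mulVec (x k)) (e ⟨j, b⟩) with hz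
  have hTx : ∀ k, T.mulVec (T⁻¹.mulVec (x k)) = x k := fun k => by
    rw [Matrix.mulVec_mulVec, Matrix.mul_nonsing_inv _ hT, Matrix.one_mulVec]
  have hzdyn : ∀ j k, z j (k + 1) = (Ablk j j).mulVec (z j k)
      + ∑ q ∈ Finset.univ.filter (fun q => q < j), (Ablk j q).mulVec (z q k) := by
    intro j k
    have h := mulVec_block_lower e ((T⁻¹ * A * T).submatrix (fun a => e ⟨j, a⟩) id) (Ablk j)
      (fun q a b => hAblk j q a b) j (hAlow j) (T⁻¹.mulVec (x k))
    refine Eq.trans ?_ h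
    ext b
    have h2 : T⁻¹.mulVec (x (k + 1)) = (T⁻¹ * A * T).mulVec (T⁻¹.mulVec (x k)) := by
      rw [← Matrix.mulVec_mulVec, hTx, ← Matrix.mulVec_mulVec, hx]
    exact congrFun h2 (e ⟨j, b⟩)
  have hy : ∀ j k, (C j).mulVec (x k) = (Cblk j j).mulVec (z j k)
      + ∑ q ∈ Finset.univ.filter (fun q => q < j), (Cblk j q).mulVec (z q k) := by
    intro j k
    have h := mulVec_block_lower e (C j * T) (Cblk j) (hCblk j) j (hClow j) (T⁻¹.mulVec (x k))
    rwa [← Matrix.mulVec_mulVec, hTx] at h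
  have main : ∀ j : Fin N, ∃ K, ∀ i k, K ≤ k → zhat i j k = z j k := by
    intro j
    induction j using WellFoundedLT.induction with
    | ind j ih =>
    -- From `K₀` on, all blocks before `j` are exact at every node.
    obtain ⟨K₀, hK₀⟩ : ∃ K₀, ∀ q < j, ∀ i k, K₀ ≤ k → zhat i q k = z q k := by
      choose f hf using fun q : {q // q < j} => ih q.1 q.2
      exact ⟨Finset.univ.sup f, fun q hq i k hk => hf ⟨q, hq⟩ i k
        ((Finset.le_sup (Finset.mem_univ (⟨q, hq⟩ : {q // q < j}))).trans hk)⟩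
    have hsumA : ∀ i k, K₀ ≤ k →
        ∑ q ∈ Finset.univ.filter (fun q => q < j), (Ablk j q).mulVec (zhat i q k)
        = ∑ q ∈ Finset.univ.filter (fun q => q < j), (Ablk j q).mulVec (z q k) := by
      intro i k hk
      refine Finset.sum_congr rfl fun q hq => ?_
      rw [hK₀ q (Finset.mem_filter.1 hq).2 i k hk]
    have herr : ∀ k, K₀ ≤ k → zhat j j (k + 1) - z j (k + 1)
        = (Ablk j j - L j * Cblk j j).mulVec (zhat j j k - z j k) := by
      intro k hk
      have hsum : ∑ q ∈ Finset.univ.filter (fun q => q < j),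
          (Ablk j q - L j * Cblk j q).mulVec (zhat j q k)
          = ∑ q ∈ Finset.univ.filter (fun q => q < j), (Ablk j q).mulVec (z q k)
            - (L j).mulVec
              (∑ q ∈ Finset.univ.filter (fun q => q < j), (Cblk j q).mulVec (z q k)) := by
        rw [Matrix.mulVec_sum, ← Finset.sum_sub_distrib]
        refine Finset.sum_congr rfl fun q hq => ?_
        rw [hK₀ q (Finset.mem_filter.1 hq).2 j k hk, Matrix.sub_mulVec, Matrix.mulVec_mulVec]
      rw [hzs, hzdyn, hsum, hy, Matrix.mulVec_add, Matrix.mulVec_sub, Matrix.sub_mulVec,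
        Matrix.sub_mulVec, Matrix.mulVec_mulVec]
      abel
    have hpow : ∀ s, zhat j j (K₀ + s) - z j (K₀ + s)
        = ((Ablk j j - L j * Cblk j j) ^ s).mulVec (zhat j j K₀ - z j K₀) := by
      intro s
      induction s with
      | zero => simp
      | succ s ihs =>
        rw [← add_assoc, herr _ (Nat.le_add_right _ _), ihs, Matrix.mulVec_mulVec, ← pow_succ']
    have hsource : ∀ k, K₀ + d j ≤ k → zhat j j k = z j k := by
      intro k hk
      obtain ⟨s, rfl⟩ := Nat.exists_eq_add_of_le hk
      have := hpow (d j + s)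
      rw [pow_add, hL, zero_mul, Matrix.zero_mulVec, ← add_assoc] at this
      exact sub_eq_zero.1 this
    set K₁ := K₀ + d j with hK₁
    have hle : ∀ i l k, l ∈ Nbrs i k → τ i j (k + 1) ≤ τ l j k + 1 := by
      intro i l k hl
      by_cases hij : i = j
      · subst hij; rw [hτs]; exact zero_le
      · have hinf : sInf ((fun l => τ l j k) '' Nbrs i k) ≤ τ l j k := sInf_le ⟨l, hl, rfl⟩
        by_cases hlt : sInf ((fun l => τ l j k) '' Nbrs i k) < τ i j k
        · obtain ⟨u, -, hu, hτ, -⟩ := (hupd i j hij k).1 hlt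
          rw [hτ, hu]; gcongr
        · rw [((hupd i j hij k).2 hlt).1]
          gcongr
          exact (not_lt.1 hlt).trans hinf
    have hle' : ∀ i k, τ i j (k + 1) ≤ τ i j k + 1 := by
      intro i k
      by_cases hij : i = j
      · subst hij; rw [hτs]; exact zero_le
      · by_cases hlt : sInf ((fun l => τ l j k) '' Nbrs i k) < τ i j k
        · obtain ⟨u, -, hu, hτ, -⟩ := (hupd i j hij k).1 hlt
          rw [hτ, hu]; gcongr
        · rw [((hupd i j hij k).2 hlt).1]
    have hstep : ∀ (a b : ℕ∞) (k : ℕ), b ≤ a + 1 → a + K₁ ≤ k → b + K₁ ≤ (k + 1 : ℕ) := by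
      intro a b k hb ha
      calc b + K₁ ≤ a + 1 + K₁ := by gcongr
        _ = a + K₁ + 1 := by ring
        _ ≤ k + 1 := by gcongr
        _ = (k + 1 : ℕ) := by push_cast; rfl
    have hback : ∀ (a : ℕ∞) (k : ℕ), a + 1 + K₁ ≤ (k + 1 : ℕ) → a + K₁ ≤ k := by
      intro a k h
      have h' : a + K₁ + 1 ≤ (k : ℕ∞) + 1 := by
        calc a + K₁ + 1 = a + 1 + K₁ := by ring
          _ ≤ (k + 1 : ℕ) := h
          _ = k + 1 := by push_cast; rfl
      exact (ENat.add_le_add_iff_right ENat.one_ne_top).1 h'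
    have hexact : ∀ k i, τ i j k + K₁ ≤ (k : ℕ∞) → zhat i j k = z j k := by
      intro k
      induction k with
      | zero =>
        intro i hi
        by_cases hij : i = j
        · subst hij
          rw [hτs, zero_add] at hi
          exact hsource 0 (by exact_mod_cast hi)
        · rw [hτ0 i j hij] at hi
          simp at hi
      | succ k ihk =>
        intro i hi
        have hK : K₁ ≤ k + 1 := by
          have : (K₁ : ℕ∞) ≤ (k + 1 : ℕ) := le_add_self.trans hi
          exact_mod_cast this
        by_cases hij : i = j
        · subst hij
          exact hsource _ hK
        · by_cases hlt : sInf ((fun l => τ l j k) '' Nbrs i k) < τ i j k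
          · obtain ⟨u, -, -, hτ, hzu⟩ := (hupd i j hij k).1 hlt
            rw [hτ] at hi
            have hu := hback _ _ hi
            have hk : K₁ ≤ k := by exact_mod_cast (le_add_self.trans hu : (K₁ : ℕ∞) ≤ k)
            rw [hzu, ihk u hu, hsumA i k (by omega), hzdyn]
          · obtain ⟨hτ, hzi⟩ := (hupd i j hij k).2 hlt
            rw [hτ] at hi
            have hu := hback _ _ hi
            have hk : K₁ ≤ k := by exact_mod_cast (le_add_self.trans hu : (K₁ : ℕ∞) ≤ k)
            rw [hzi, ihk i hu, hsumA i k (by omega), hzdyn]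
    obtain ⟨K, hK⟩ := eventually_all_informed Nbrs t htmono hC3
      (fun i k => τ i j k + K₁ ≤ (k : ℕ∞))
      (fun i k h => hstep _ _ k (hle' i k) h)
      (fun i l k hl h => hstep _ _ k (hle i l k hl) h)
      j K₁ (by simp [hτs])
    exact ⟨K, fun i k hk => hexact k i (hK i k hk)⟩
  choose f hf using main
  refine ⟨Finset.univ.sup f, fun i k hk => ?_⟩
  rw [← hTx k]
  congr 1
  ext p
  rw [hf (e.symm p).1 i k ((Finset.le_sup (Finset.mem_univ _)).trans hk)]
  simp [hz]
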